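/- Let 𝓓 = (Ω, 𝓑) be a β(i) design with parameter (v, k, d), set c = k−d, and assume i ≥ 2 and that v does not achieve the upper bound (d+2(i−1))·(k−d)/(i−1), i.e. (i−1)·v < (d+2(i−1))·(k−d). Then g(v−k, d, c, i) ≥ 0. Moreover, g(v−k, d, c, i) = 0 holds if and only if the number |{B ∈ 𝓑 : |X ∩ B| = d+i−2}| is the same for every X ∈ S₁. -/

import Mathlib

open Finset

variable {α : Type*} [Fintype α] [DecidableEq α]

/-- `𝓑` is a design on the finite type `α` of cardinality `v`, with block size `k` and
maximal pairwise block intersection size `d`. -/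
def IsDesign (𝓑 : Finset (Finset α)) (v k d : ℕ) : Prop :=
  Fintype.card α = v ∧ 2 ≤ 𝓑.card ∧ d < k ∧ k < v ∧
  (∀ B ∈ 𝓑, B.card = k) ∧
  (∀ B ∈ 𝓑, ∀ C ∈ 𝓑, B ≠ C → (B ∩ C).card ≤ d) ∧
  (∃ B ∈ 𝓑, ∃ C ∈ 𝓑, B ≠ C ∧ (B ∩ C).card = d)

/-- `𝓑` is a `β(i)` design with parameters `(v, k, d)`: a design such that
`1 ≤ i ≤ (v - d + 1)/2` and every `(d + 2i - 1)`-element subset `X` of `Ω` admits a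
unique block `B` with `|X ∩ B| ≥ d + i`. -/
def IsBetaDesign (𝓑 : Finset (Finset α)) (v k d i : ℕ) : Prop :=
  IsDesign 𝓑 v k d ∧ 1 ≤ i ∧ 2 * i ≤ v - d + 1 ∧
  ∀ X : Finset α, X.card = d + 2 * i - 1 →
    ∃! B, B ∈ 𝓑 ∧ d + i ≤ (X ∩ B).card

/-- The family `S₁` of all `(d + 2(i-2))`-element subsets `X` of `Ω` such that
`|X ∩ B| ≤ d + i - 2` for every block `B ∈ 𝓑`. -/
def S1 (𝓑 : Finset (Finset α)) (d i : ℕ) : Finset (Finset α) :=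
  (Finset.univ : Finset (Finset α)).filter
    (fun X => X.card = d + 2 * (i - 2) ∧ ∀ B ∈ 𝓑, (X ∩ B).card ≤ d + i - 2)

/-- The polynomial `g(x, d, c, i)` of Proposition 6. -/
noncomputable def gPoly (x d c i : ℝ) : ℝ :=
  (i - 1) * (i - 2) * x ^ 2
    - (i - 1) * (2 * (c - i + 1) * d + 2 * c * (i - 1) - 3 * i + 4) * x
    + (c - i + 1) * (c - i + 2) * d ^ 2
    + (c - i + 1) * ((2 * i - 3) * c + 3 * i - 4) * d
    + (i - 1) * (i - 2) * c ^ 2 + (i - 1) * (3 * i - 4) * c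
    - 2 * (i - 1) ^ 2 * (2 * i - 3)

set_option linter.unusedSectionVars false


lemma aux_count (D U W : Finset α) (a e : ℕ) (h1 : Disjoint D U) (h2 : Disjoint D W)
    (h3 : Disjoint U W) :
    ((univ : Finset (Finset α)).filter (fun Y => D ⊆ Y ∧ Y ⊆ D ∪ U ∪ W ∧ (Y ∩ U).card = a ∧
      (Y ∩ W).card = e)).card = U.card.choose a * W.card.choose e := by
  rw [← card_powersetCard, ← card_powersetCard, ← card_product]
  rw [Finset.disjoint_left] at h1 h2 h3
  symm
  refine Finset.card_bij' (fun q _ => D ∪ q.1 ∪ q.2) (fun Y _ => (Y ∩ U, Y ∩ W)) ?_ ?_ ?_ ?_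
  · rintro ⟨P, Q⟩ h
    simp only [mem_product, mem_powersetCard] at h
    obtain ⟨⟨hP, rfl⟩, hQ, rfl⟩ := h
    simp only [mem_filter, mem_univ, true_and]
    refine ⟨?_, ?_, ?_, ?_⟩
    · intro z hz; simp [hz]
    · intro z hz
      have := @hP z
      have := @hQ z
      simp only [mem_union] at hz ⊢; tauto
    · congr 1; ext z
      have := @hP z
      have := @hQ z
      have := @h1 z
      have := @h3 z
      simp only [mem_union, mem_inter]; tauto
    · congr 1; ext z
      have := @hP z
      have := @hQ z
      have := @h2 z
      have := @h3 z
      simp only [mem_union, mem_inter]; tauto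
  · intro Y h
    simp only [mem_filter, mem_univ, true_and] at h
    simp only [mem_product, mem_powersetCard]
    exact ⟨⟨inter_subset_right, h.2.2.1⟩, inter_subset_right, h.2.2.2⟩
  · rintro ⟨P, Q⟩ h
    simp only [mem_product, mem_powersetCard] at h
    obtain ⟨⟨hP, -⟩, hQ, -⟩ := h
    simp only [Prod.mk.injEq]
    constructor
    · ext z
      have := @hP z
      have := @hQ z
      have := @h1 z
      have := @h3 z
      simp only [mem_union, mem_inter]; tauto
    · ext z
      have := @hP z
      have := @hQ z
      have := @h2 z
      have := @h3 z
      simp only [mem_union, mem_inter]; tauto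
  · intro Y h
    simp only [mem_filter, mem_univ, true_and] at h
    obtain ⟨ha, hb, -, -⟩ := h
    ext z
    have := @ha z
    have := @hb z
    simp only [mem_union, mem_inter] at *; tauto

lemma single_count (B : Finset α) (s e : ℕ) :
    ((univ : Finset (Finset α)).filter (fun Y => Y.card = s + e ∧ (Y ∩ B).card = s)).card
      = B.card.choose s * (Fintype.card α - B.card).choose e := by
  rw [← card_compl, ← aux_count ∅ B Bᶜ s e (by simp) (by simp) disjoint_compl_right]
  congr 1
  ext Y
  have h : (Y ∩ B).card + (Y ∩ Bᶜ).card = Y.card := by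
    rw [← sdiff_eq_inter_compl]; exact card_inter_add_card_sdiff Y B
  have h' : Y ⊆ ∅ ∪ B ∪ Bᶜ := by simp
  simp only [mem_filter, mem_univ, true_and, h', empty_subset]
  omega

/-- Counting identity for two sets. -/
lemma two_card (B C Y : Finset α) :
    (Y ∩ B).card + (Y ∩ C).card + (Y \ (B ∪ C)).card = Y.card + (Y ∩ (B ∩ C)).card ∧
    (Y ∩ B).card = (Y ∩ (B ∩ C)).card + (Y ∩ (B \ C)).card ∧
    (Y ∩ C).card = (Y ∩ (B ∩ C)).card + (Y ∩ (C \ B)).card ∧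
    (Y ∩ (B ∩ C)).card + ((B ∩ C) \ Y).card = (B ∩ C).card := by
  have e1 : (Y ∩ B).card = (Y ∩ (B ∩ C)).card + (Y ∩ (B \ C)).card := by
    rw [← card_inter_add_card_sdiff (Y ∩ B) C]
    congr 2 <;> ext z <;> simp only [mem_inter, mem_sdiff] <;> tauto
  have e2 : (Y ∩ C).card = (Y ∩ (B ∩ C)).card + (Y ∩ (C \ B)).card := by
    rw [← card_inter_add_card_sdiff (Y ∩ C) B]
    congr 2 <;> ext z <;> simp only [mem_inter, mem_sdiff] <;> tauto
  have e3 : (Y ∩ (B ∩ C)).card + ((B ∩ C) \ Y).card = (B ∩ C).card := by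
    rw [← card_inter_add_card_sdiff (B ∩ C) Y, inter_comm Y]
  have e4 := card_inter_add_card_sdiff Y (B ∪ C)
  have e5 : (Y ∩ (B ∪ C)).card + (Y ∩ (B ∩ C)).card = (Y ∩ B).card + (Y ∩ C).card := by
    rw [← card_union_add_card_inter (Y ∩ B) (Y ∩ C)]
    congr 2 <;> ext z <;> simp only [mem_inter, mem_union] <;> tauto
  exact ⟨by omega, e1, e2, e3⟩

lemma excl {B C Y : Finset α} {d : ℕ} (h : (B ∩ C).card ≤ d) :
    (Y ∩ B).card + (Y ∩ C).card ≤ Y.card + d := by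
  obtain ⟨h1, h2, h3, h4⟩ := two_card B C Y
  omega

lemma pair_count (B C : Finset α) (d c a e : ℕ) (hB : B.card = d + c) (hC : C.card = d + c)
    (h : (B ∩ C).card ≤ d) :
    ((univ : Finset (Finset α)).filter (fun Y => Y.card = d + a + e ∧ (Y ∩ B).card = d + a ∧
      (Y ∩ C).card = d + e)).card
      = if (B ∩ C).card = d then c.choose a * c.choose e else 0 := by
  split_ifs with hd
  · have hB' : (B \ C).card = c := by
      have := card_inter_add_card_sdiff B C; omega
    have hC' : (C \ B).card = c := by
      have := card_inter_add_card_sdiff C B; rw [inter_comm] at this; omega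
    have key := aux_count (B ∩ C) (B \ C) (C \ B) a e
      (by rw [Finset.disjoint_left]; intro z; simp only [mem_inter, mem_sdiff]; tauto)
      (by rw [Finset.disjoint_left]; intro z; simp only [mem_inter, mem_sdiff]; tauto)
      (by rw [Finset.disjoint_left]; intro z; simp only [mem_sdiff]; tauto)
    rw [hB', hC'] at key
    rw [← key]
    congr 1
    ext Y
    obtain ⟨h1, h2, h3, h4⟩ := two_card B C Y
    have u : B ∩ C ∪ B \ C ∪ C \ B = B ∪ C := by
      ext z; simp only [mem_inter, mem_sdiff, mem_union]; tauto
    rw [mem_filter, mem_filter, u, ← sdiff_eq_empty_iff_subset, ← sdiff_eq_empty_iff_subset,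
      ← card_eq_zero, ← card_eq_zero]
    simp only [mem_univ, true_and]
    omega
  · rw [card_eq_zero, filter_eq_empty_iff]
    rintro Y - ⟨k1, k2, k3⟩
    obtain ⟨h1, h2, h3, h4⟩ := two_card B C Y
    omega

section core
variable {𝓑 : Finset (Finset α)} {d c x j : ℕ}

/-- Blocks meeting `Y` in exactly `s` points. -/
def bl (𝓑 : Finset (Finset α)) (Y : Finset α) (s : ℕ) : Finset (Finset α) :=
  𝓑.filter (fun B => (Y ∩ B).card = s)

/-- Uncovered sets. -/
def unc (𝓑 : Finset (Finset α)) (t s : ℕ) : Finset (Finset α) :=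
  (univ : Finset (Finset α)).filter (fun Y => Y.card = t ∧ ∀ B ∈ 𝓑, (Y ∩ B).card ≤ s)

lemma sdiff_card' {Y C : Finset α} {s q : ℕ} (h : (Y ∩ C).card = s) (hC : C.card = s + q) :
    (C \ Y).card = q := by
  have := card_inter_add_card_sdiff C Y
  rw [inter_comm] at this; omega

lemma inter_add {Y Z C : Finset α} (h : Disjoint Y Z) :
    ((Y ∪ Z) ∩ C).card = (Y ∩ C).card + (Z ∩ C).card := by
  rw [union_inter_distrib_right, card_union_of_disjoint]
  exact Disjoint.mono inter_subset_left inter_subset_left h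

lemma step1 (hv : Fintype.card α = d + c + x) (hk : ∀ B ∈ 𝓑, B.card = d + c)
    (hd : ∀ B ∈ 𝓑, ∀ C ∈ 𝓑, B ≠ C → (B ∩ C).card ≤ d)
    (hb : ∀ X : Finset α, X.card = d + 2 * j + 3 → ∃ B ∈ 𝓑, d + j + 2 ≤ (X ∩ B).card)
    (hcj : j + 2 ≤ c) {Y : Finset α} (hY : Y ∈ unc 𝓑 (d + 2 * j + 2) (d + j + 1)) :
    (bl 𝓑 Y (d + j + 1)).card * (c - j - 1) + (d + 2 * j + 2) = d + c + x := by
  simp only [unc, mem_filter, mem_univ, true_and] at hY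
  obtain ⟨hY1, hY2⟩ := hY
  have e : Yᶜ = (bl 𝓑 Y (d + j + 1)).biUnion (fun C => C \ Y) := by
    ext y
    simp only [mem_compl, mem_biUnion, bl, mem_filter, mem_sdiff]
    constructor
    · intro hy
      have dis : Disjoint Y {y} := by simpa using hy
      obtain ⟨B, hB, h⟩ := hb (Y ∪ {y}) (by rw [card_union_of_disjoint dis]; simp; omega)
      rw [inter_add dis] at h
      have h2 := hY2 B hB
      have h3 : ({y} ∩ B).card ≤ 1 := (card_le_card inter_subset_left).trans (by simp)
      have h4 : ({y} ∩ B).card ≠ 0 := by omega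
      refine ⟨B, ⟨hB, by omega⟩, ?_, hy⟩
      by_contra h5
      exact h4 (by simp [h5])
    · rintro ⟨B, -, -, h⟩; exact h
  have e2 := card_compl Y
  rw [e, card_biUnion, sum_congr rfl (g := fun _ => c - j - 1), sum_const, smul_eq_mul] at e2
  · have := card_le_univ Y
    omega
  · intro C hC
    simp only [bl, mem_filter] at hC
    exact sdiff_card' hC.2 (by rw [hk C hC.1]; omega)
  · intro B hB C hC hne
    simp only [bl, coe_filter, Set.mem_ofPred_eq] at hB hC
    rw [Function.onFun]
    rw [Finset.disjoint_left]
    intro y h1 h2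
    simp only [mem_sdiff] at h1 h2
    have dis : Disjoint Y {y} := by simpa using h1.2
    have := excl (Y := Y ∪ {y}) (hd B hB.1 C hC.1 hne)
    rw [inter_add dis, inter_add dis, card_union_of_disjoint dis] at this
    simp [h1.1, h2.1] at this
    omega

lemma step2 (hv : Fintype.card α = d + c + x) (hk : ∀ B ∈ 𝓑, B.card = d + c)
    (hd : ∀ B ∈ 𝓑, ∀ C ∈ 𝓑, B ≠ C → (B ∩ C).card ≤ d)
    (hb : ∀ X : Finset α, X.card = d + 2 * j + 3 → ∃ B ∈ 𝓑, d + j + 2 ≤ (X ∩ B).card)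
    (hcj : j + 2 ≤ c) {Y : Finset α} (hY : Y ∈ unc 𝓑 (d + 2 * j + 1) (d + j)) :
    (bl 𝓑 Y (d + j)).card * ((c - j) * (c - j) - (c - j))
      = (d + c + x - (d + 2 * j + 1)) * (d + c + x - (d + 2 * j + 1))
        - (d + c + x - (d + 2 * j + 1)) := by
  simp only [unc, mem_filter, mem_univ, true_and] at hY
  obtain ⟨hY1, hY2⟩ := hY
  have e : Yᶜ.offDiag = (bl 𝓑 Y (d + j)).biUnion (fun C => (C \ Y).offDiag) := by
    ext ⟨y, z⟩
    simp only [mem_offDiag, mem_compl, mem_biUnion, bl, mem_filter, mem_sdiff]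
    constructor
    · rintro ⟨hy, hz, hyz⟩
      have dis : Disjoint Y {y, z} := by
        rw [Finset.disjoint_right]; intro w hw
        simp only [mem_insert, mem_singleton] at hw
        rcases hw with rfl | rfl <;> assumption
      have c2 : ({y, z} : Finset α).card = 2 := card_pair hyz
      obtain ⟨B, hB, h⟩ := hb (Y ∪ {y, z}) (by rw [card_union_of_disjoint dis]; omega)
      rw [inter_add dis] at h
      have h2 := hY2 B hB
      have h3 : ({y, z} ∩ B).card ≤ 2 := (card_le_card inter_subset_left).trans (by omega)
      have h4 : {y, z} ∩ B = {y, z} := eq_of_subset_of_card_le inter_subset_left (by omega)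
      rw [inter_eq_left] at h4
      refine ⟨B, ⟨hB, by omega⟩, ⟨h4 (by simp), hy⟩, ⟨h4 (by simp), hz⟩, hyz⟩
    · rintro ⟨B, -, h1, h2, h3⟩; exact ⟨h1.2, h2.2, h3⟩
  have e2 := offDiag_card Yᶜ
  rw [card_compl, hv, hY1, e, card_biUnion,
    sum_congr rfl (g := fun _ => (c - j) * (c - j) - (c - j)), sum_const, smul_eq_mul] at e2
  · exact e2
  · intro C hC
    simp only [bl, mem_filter] at hC
    rw [offDiag_card, sdiff_card' (q := c - j) hC.2 (by rw [hk C hC.1]; omega)]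
  · intro B hB C hC hne
    simp only [bl, coe_filter, Set.mem_ofPred_eq] at hB hC
    rw [Function.onFun]
    rw [Finset.disjoint_left]
    rintro ⟨y, z⟩ h1 h2
    simp only [mem_offDiag, mem_sdiff] at h1 h2
    obtain ⟨⟨p1, p2⟩, ⟨p3, p4⟩, hyz⟩ := h1
    obtain ⟨⟨p5, -⟩, ⟨p6, -⟩, -⟩ := h2
    have dis : Disjoint Y {y, z} := by
      rw [Finset.disjoint_right]; intro w hw
      simp only [mem_insert, mem_singleton] at hw
      rcases hw with rfl | rfl <;> assumption
    have c2 : ({y, z} : Finset α).card = 2 := card_pair hyz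
    have := excl (Y := Y ∪ {y, z}) (hd B hB.1 C hC.1 hne)
    have i1 : {y, z} ∩ B = {y, z} := by
      rw [inter_eq_left]; intro w hw
      simp only [mem_insert, mem_singleton] at hw
      rcases hw with rfl | rfl <;> assumption
    have i2 : {y, z} ∩ C = {y, z} := by
      rw [inter_eq_left]; intro w hw
      simp only [mem_insert, mem_singleton] at hw
      rcases hw with rfl | rfl <;> assumption
    rw [inter_add dis, inter_add dis, card_union_of_disjoint dis, i1, i2, c2] at this
    omega

lemma step3 (hv : Fintype.card α = d + c + x) (hk : ∀ B ∈ 𝓑, B.card = d + c)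
    (hd : ∀ B ∈ 𝓑, ∀ C ∈ 𝓑, B ≠ C → (B ∩ C).card ≤ d)
    (hcj : j + 2 ≤ c) {Y : Finset α} (hY : Y ∈ unc 𝓑 (d + 2 * j) (d + j)) :
    (bl 𝓑 Y (d + j)).card * (c - j)
      + ((unc 𝓑 (d + 2 * j + 1) (d + j)).filter (fun Z => Y ⊆ Z)).card + (d + 2 * j)
      = d + c + x := by
  simp only [unc, mem_filter, mem_univ, true_and] at hY
  obtain ⟨hY1, hY2⟩ := hY
  have e : Yᶜ.filter (fun y => ¬ ∀ B ∈ 𝓑, ((Y ∪ {y}) ∩ B).card ≤ d + j)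
      = (bl 𝓑 Y (d + j)).biUnion (fun C => C \ Y) := by
    ext y
    simp only [mem_compl, mem_biUnion, bl, mem_filter, mem_sdiff]
    constructor
    · rintro ⟨hy, h⟩
      push Not at h
      obtain ⟨B, hB, h⟩ := h
      have dis : Disjoint Y {y} := by simpa using hy
      rw [inter_add dis] at h
      have h2 := hY2 B hB
      have h3 : ({y} ∩ B).card ≤ 1 := (card_le_card inter_subset_left).trans (by simp)
      have h4 : ({y} ∩ B).card ≠ 0 := by omega
      refine ⟨B, ⟨hB, by omega⟩, ?_, hy⟩
      by_contra h5
      exact h4 (by simp [h5])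
    · rintro ⟨B, ⟨hB, h1⟩, h2, h3⟩
      refine ⟨h3, fun h => ?_⟩
      have := h B hB
      have dis : Disjoint Y {y} := by simpa using h3
      rw [inter_add dis] at this
      simp [h2] at this
      omega
  have e' : (Yᶜ.filter (fun y => ∀ B ∈ 𝓑, ((Y ∪ {y}) ∩ B).card ≤ d + j)).card
      = ((unc 𝓑 (d + 2 * j + 1) (d + j)).filter (fun Z => Y ⊆ Z)).card := by
    refine Finset.card_bij (fun y _ => Y ∪ {y}) ?_ ?_ ?_
    · intro y hy
      simp only [mem_filter, mem_compl, unc, mem_univ, true_and] at hy ⊢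
      have dis : Disjoint Y {y} := by simpa using hy.1
      exact ⟨⟨by rw [card_union_of_disjoint dis, hY1]; simp, hy.2⟩, subset_union_left⟩
    · intro y hy z hz h
      simp only [mem_filter, mem_compl] at hy hz
      have : y ∈ Y ∪ {z} := by rw [← h]; simp
      simp only [mem_union, mem_singleton] at this
      tauto
    · intro Z hZ
      simp only [mem_filter, unc, mem_univ, true_and] at hZ
      have h1 : (Z \ Y).card = 1 := by rw [card_sdiff_of_subset hZ.2]; omega
      obtain ⟨y, hy⟩ := card_eq_one.mp h1
      have h2 : Y ∪ {y} = Z := by rw [← hy]; exact union_sdiff_of_subset hZ.2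
      have h3 : y ∈ Z \ Y := by rw [hy]; simp
      refine ⟨y, ?_, h2⟩
      simp only [mem_filter, mem_compl, h2]
      exact ⟨(mem_sdiff.mp h3).2, hZ.1.2⟩
  have e2 := card_compl Y
  rw [← card_filter_add_card_filter_not (s := Yᶜ)
    (fun y => ∀ B ∈ 𝓑, ((Y ∪ {y}) ∩ B).card ≤ d + j), e', e, card_biUnion,
    sum_congr rfl (g := fun _ => c - j), sum_const, smul_eq_mul] at e2
  · have := card_le_univ Y
    omega
  · intro C hC
    simp only [bl, mem_filter] at hC
    exact sdiff_card' hC.2 (by rw [hk C hC.1]; omega)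
  · intro B hB C hC hne
    simp only [bl, coe_filter, Set.mem_ofPred_eq] at hB hC
    rw [Function.onFun]
    rw [Finset.disjoint_left]
    intro y h1 h2
    simp only [mem_sdiff] at h1 h2
    have dis : Disjoint Y {y} := by simpa using h1.2
    have := excl (Y := Y ∪ {y}) (hd B hB.1 C hC.1 hne)
    rw [inter_add dis, inter_add dis, card_union_of_disjoint dis] at this
    simp [h1.1, h2.1] at this
    omega

lemma swap_count {β γ : Type*} (s : Finset β) (t : Finset γ) (r : β → γ → Prop)
    [∀ a b, Decidable (r a b)] :
    ∑ a ∈ s, (t.filter (fun b => r a b)).card = ∑ b ∈ t, (s.filter (fun a => r a b)).card :=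
  Finset.sum_card_bipartiteAbove_eq_sum_card_bipartiteBelow r

/-- The number of blocks meeting `B` in exactly `d` points. -/
def nb (𝓑 : Finset (Finset α)) (d : ℕ) (B : Finset α) : ℕ :=
  ((𝓑.erase B).filter (fun C => (B ∩ C).card = d)).card

lemma pairsum (hk : ∀ B ∈ 𝓑, B.card = d + c)
    (hd : ∀ B ∈ 𝓑, ∀ C ∈ 𝓑, B ≠ C → (B ∩ C).card ≤ d) {B : Finset α} (hB : B ∈ 𝓑) (a e : ℕ) :
    ∑ C ∈ 𝓑.erase B, ((univ : Finset (Finset α)).filter (fun Y => Y.card = d + a + e ∧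
      (Y ∩ B).card = d + a ∧ (Y ∩ C).card = d + e)).card
      = nb 𝓑 d B * (c.choose a * c.choose e) := by
  rw [sum_congr rfl (g := fun C => if (B ∩ C).card = d then c.choose a * c.choose e else 0)]
  · rw [← sum_filter, sum_const, smul_eq_mul, nb]
  · intro C hC
    obtain ⟨h1, h2⟩ := mem_erase.mp hC
    exact pair_count B C d c a e (hk B hB) (hk C h2) (hd B hB C h2 h1.symm)

lemma lemA (hv : Fintype.card α = d + c + x) (hk : ∀ B ∈ 𝓑, B.card = d + c)
    (hd : ∀ B ∈ 𝓑, ∀ C ∈ 𝓑, B ≠ C → (B ∩ C).card ≤ d)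
    (hb : ∀ X : Finset α, X.card = d + 2 * j + 3 → ∃ B ∈ 𝓑, d + j + 2 ≤ (X ∩ B).card)
    (hcj : j + 2 ≤ c) {B : Finset α} (hB : B ∈ 𝓑) :
    nb 𝓑 d B * (c.choose (j + 1) * c.choose (j + 1)) * (c - j - 1)
      = (d + c).choose (d + j + 1) * x.choose (j + 1) * (x - j - 1) := by
  have h1 := single_count B (d + j + 1) (j + 1)
  rw [hk B hB, show Fintype.card α - (d + c) = x by omega] at h1
  rw [← h1, ← pairsum hk hd hB (j + 1) (j + 1)]
  have h2 := swap_count (univ.filter (fun Y : Finset α => Y.card = d + j + 1 + (j + 1) ∧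
    (Y ∩ B).card = d + j + 1)) (𝓑.erase B) (fun Y C => (Y ∩ C).card = d + j + 1)
  simp only [filter_filter] at h2
  have h3 : ∀ C : Finset α, (univ.filter (fun Y : Finset α => (Y.card = d + j + 1 + (j + 1) ∧
      (Y ∩ B).card = d + j + 1) ∧ (Y ∩ C).card = d + j + 1))
      = univ.filter (fun Y => Y.card = d + (j + 1) + (j + 1) ∧
      (Y ∩ B).card = d + (j + 1) ∧ (Y ∩ C).card = d + (j + 1)) := by
    intro C; ext Y; simp only [mem_filter, mem_univ, true_and]; omega
  simp only [h3] at h2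
  rw [← h2, sum_mul, sum_congr rfl (g := fun _ => x - j - 1), sum_const, smul_eq_mul]
  intro Y hY
  simp only [mem_filter, mem_univ, true_and] at hY
  have hu : Y ∈ unc 𝓑 (d + 2 * j + 2) (d + j + 1) := by
    simp only [unc, mem_filter, mem_univ, true_and]
    refine ⟨by omega, fun C hC => ?_⟩
    by_cases hne : B = C
    · subst hne; omega
    · have := excl (Y := Y) (hd B hB C hC hne); omega
  have h4 := step1 hv hk hd hb hcj hu
  have h5 : (𝓑.erase B).filter (fun C => (Y ∩ C).card = d + j + 1)
      = (bl 𝓑 Y (d + j + 1)).erase B := by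
    ext C; simp only [bl, mem_filter, mem_erase]; tauto
  have h6 : B ∈ bl 𝓑 Y (d + j + 1) := by simp only [bl, mem_filter]; exact ⟨hB, hY.2⟩
  rw [h5]
  rw [← card_erase_add_one h6, add_mul, one_mul] at h4
  omega

lemma s1_filter (hd : ∀ B ∈ 𝓑, ∀ C ∈ 𝓑, B ≠ C → (B ∩ C).card ≤ d) {B : Finset α} (hB : B ∈ 𝓑) :
    (unc 𝓑 (d + 2 * j) (d + j)).filter (fun X => (X ∩ B).card = d + j)
      = univ.filter (fun X => X.card = d + j + j ∧ (X ∩ B).card = d + j) := by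
  ext X
  simp only [unc, mem_filter, mem_univ, true_and]
  constructor
  · rintro ⟨⟨h1, -⟩, h2⟩; exact ⟨by omega, h2⟩
  · rintro ⟨h1, h2⟩
    refine ⟨⟨by omega, fun C hC => ?_⟩, h2⟩
    by_cases hne : B = C
    · subst hne; omega
    · have := excl (Y := X) (hd B hB C hC hne); omega

lemma lemB (hv : Fintype.card α = d + c + x) (hk : ∀ B ∈ 𝓑, B.card = d + c)
    (hd : ∀ B ∈ 𝓑, ∀ C ∈ 𝓑, B ≠ C → (B ∩ C).card ≤ d) :
    ∑ X ∈ unc 𝓑 (d + 2 * j) (d + j), (bl 𝓑 X (d + j)).card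
      = 𝓑.card * ((d + c).choose (d + j) * x.choose j) := by
  simp only [bl]
  rw [swap_count _ _ (fun (X B : Finset α) => (X ∩ B).card = d + j),
    sum_congr rfl (g := fun _ => (d + c).choose (d + j) * x.choose j), sum_const, smul_eq_mul]
  intro B hB
  rw [s1_filter hd hB, single_count, hk B hB, show Fintype.card α - (d + c) = x by omega]

lemma lemC (hk : ∀ B ∈ 𝓑, B.card = d + c)
    (hd : ∀ B ∈ 𝓑, ∀ C ∈ 𝓑, B ≠ C → (B ∩ C).card ≤ d) :
    ∑ X ∈ unc 𝓑 (d + 2 * j) (d + j), (bl 𝓑 X (d + j)).card * (bl 𝓑 X (d + j)).card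
      = ∑ X ∈ unc 𝓑 (d + 2 * j) (d + j), (bl 𝓑 X (d + j)).card
        + (∑ B ∈ 𝓑, nb 𝓑 d B) * (c.choose j * c.choose j) := by
  have h0 : ∀ X : Finset α, (bl 𝓑 X (d + j)).card * (bl 𝓑 X (d + j)).card =
      (bl 𝓑 X (d + j)).card + ∑ B ∈ bl 𝓑 X (d + j),
        ((𝓑.erase B).filter (fun C => (X ∩ C).card = d + j)).card := by
    intro X
    have : ∀ B ∈ bl 𝓑 X (d + j), 1 + ((𝓑.erase B).filter (fun C => (X ∩ C).card = d + j)).card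
        = (bl 𝓑 X (d + j)).card := by
      intro B hB
      have h5 : (𝓑.erase B).filter (fun C => (X ∩ C).card = d + j)
          = (bl 𝓑 X (d + j)).erase B := by
        ext C; simp only [bl, mem_filter, mem_erase]; tauto
      rw [h5, ← card_erase_add_one hB, add_comm]
    rw [← smul_eq_mul, ← sum_const, ← sum_congr rfl this, sum_add_distrib]
    simp
  simp only [h0]
  rw [sum_add_distrib, sum_mul]
  congr 1
  rw [sum_comm' (t' := 𝓑) (s' := fun B => (unc 𝓑 (d + 2 * j) (d + j)).filter
    (fun X => (X ∩ B).card = d + j))]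
  · refine sum_congr rfl fun B hB => ?_
    rw [s1_filter hd hB, ← pairsum hk hd hB j j,
      swap_count _ _ (fun (X C : Finset α) => (X ∩ C).card = d + j)]
    refine sum_congr rfl fun C hC => ?_
    rw [filter_filter]
    simp only [and_assoc]
  · intro X B; simp only [bl, mem_filter]; tauto

lemma lemD (hv : Fintype.card α = d + c + x) (hk : ∀ B ∈ 𝓑, B.card = d + c)
    (hd : ∀ B ∈ 𝓑, ∀ C ∈ 𝓑, B ≠ C → (B ∩ C).card ≤ d) :
    ∑ Y ∈ unc 𝓑 (d + 2 * j + 1) (d + j), (bl 𝓑 Y (d + j)).card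
      + (∑ B ∈ 𝓑, nb 𝓑 d B) * (c.choose j * c.choose (j + 1))
      = 𝓑.card * ((d + c).choose (d + j) * x.choose (j + 1)) := by
  simp only [bl]
  rw [swap_count _ _ (fun (X B : Finset α) => (X ∩ B).card = d + j), sum_mul, ← sum_add_distrib,
    sum_congr rfl (g := fun _ => (d + c).choose (d + j) * x.choose (j + 1)), sum_const,
    smul_eq_mul]
  intro B hB
  have h1 := single_count B (d + j) (j + 1)
  rw [hk B hB, show Fintype.card α - (d + c) = x by omega] at h1
  rw [← h1, ← pairsum hk hd hB j (j + 1)]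
  have h2 := swap_count (univ.filter (fun Y : Finset α => Y.card = d + j + (j + 1) ∧
    (Y ∩ B).card = d + j)) (𝓑.erase B) (fun Y C => (Y ∩ C).card = d + (j + 1))
  simp only [filter_filter, and_assoc] at h2
  rw [← h2]
  have h3 : (unc 𝓑 (d + 2 * j + 1) (d + j)).filter (fun X => (X ∩ B).card = d + j)
      = (univ.filter (fun Y : Finset α => Y.card = d + j + (j + 1) ∧
    (Y ∩ B).card = d + j)).filter (fun Y => Y ∈ unc 𝓑 (d + 2 * j + 1) (d + j)) := by
    ext Y
    simp only [unc, mem_filter, mem_univ, true_and]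
    constructor
    · rintro ⟨⟨h4, h5⟩, h6⟩; exact ⟨⟨by omega, h6⟩, h4, h5⟩
    · rintro ⟨⟨h4, h6⟩, h5⟩; exact ⟨h5, h6⟩
  rw [h3, card_filter, ← sum_add_distrib, card_eq_sum_ones]
  refine sum_congr rfl fun Y hY => ?_
  simp only [mem_filter, mem_univ, true_and] at hY
  split_ifs with hu
  · simp only [unc, mem_filter, mem_univ, true_and] at hu
    have : (𝓑.erase B).filter (fun C => (Y ∩ C).card = d + (j + 1)) = ∅ := by
      rw [filter_eq_empty_iff]
      intro C hC h
      have := hu.2 C (mem_of_mem_erase hC)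
      omega
    rw [this]; simp
  · simp only [unc, mem_filter, mem_univ, true_and, not_and, not_forall, not_le] at hu
    obtain ⟨C, hC, h4⟩ := hu (by omega)
    have hne : B ≠ C := by rintro rfl; omega
    have h5 := excl (Y := Y) (hd B hB C hC hne)
    have : (𝓑.erase B).filter (fun C => (Y ∩ C).card = d + (j + 1)) = {C} := by
      ext E
      simp only [mem_filter, mem_erase, mem_singleton]
      constructor
      · rintro ⟨⟨-, hE⟩, h6⟩
        by_contra hEC
        have := excl (Y := Y) (hd E hE C hC hEC)
        omega
      · rintro rfl
        exact ⟨⟨hne.symm, hC⟩, by omega⟩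
    rw [this]; simp

lemma lemE : ∑ X ∈ unc 𝓑 (d + 2 * j) (d + j),
      ((unc 𝓑 (d + 2 * j + 1) (d + j)).filter (fun Z => X ⊆ Z)).card
      = (unc 𝓑 (d + 2 * j + 1) (d + j)).card * (d + 2 * j + 1) := by
  rw [swap_count _ _ (fun (X Z : Finset α) => X ⊆ Z),
    sum_congr rfl (g := fun _ => d + 2 * j + 1), sum_const, smul_eq_mul]
  intro Z hZ
  simp only [unc, mem_filter, mem_univ, true_and] at hZ
  have : (unc 𝓑 (d + 2 * j) (d + j)).filter (fun X => X ⊆ Z) = powersetCard (d + 2 * j) Z := by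
    ext X
    simp only [unc, mem_filter, mem_univ, true_and, mem_powersetCard]
    constructor
    · rintro ⟨⟨h1, -⟩, h2⟩; exact ⟨h2, h1⟩
    · rintro ⟨h1, h2⟩
      exact ⟨⟨h2, fun B hB => (card_le_card (inter_subset_inter_right h1)).trans (hZ.2 B hB)⟩, h1⟩
  rw [this, card_powersetCard, hZ.1, Nat.choose_succ_self_right]

end core

lemma alg_core (Q M S T R d j p y : ℝ) (hj : 0 < j + 1) (hdj : 0 < d + j + 1) (hp : 0 < p - 1)
    (hy : 0 < y - 1)
    (hM : p * (p - 1) * (d + j + 1) * M = Q * (j + 1) * y * (y - 1))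
    (hR : (j + 1) * R = Q * y - M * p)
    (hT : p * (p - 1) * R = (y + p - 1) * (y + p - 2) * T)
    (hS : (y + p) * S = p * Q + (d + 2 * j + 1) * T) :
    (y + p) * (y + p - 1) * (y + p - 2) * (j + 1) * (d + j + 1) ^ 2 * (p - 1)
      * (S * (M + Q) - Q ^ 2)
      = Q ^ 2 * y * gPoly (y + j) d (p + j) (j + 2)
        * (d * (p + j) + (j + 1) * (p - y - d)) := by
  have hp0 : 0 < p := by linarith
  have h1 : 0 < y + p := by linarith
  have h2 : 0 < y + p - 1 := by linarith
  have h3 : 0 < y + p - 2 := by linarith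
  have eM : M = Q * (j + 1) * y * (y - 1) / (p * (p - 1) * (d + j + 1)) := by
    rw [eq_div_iff (by positivity)]; linarith
  have eR : R = (Q * y - M * p) / (j + 1) := by
    rw [eq_div_iff (by positivity)]; linarith
  have eT : T = p * (p - 1) * R / ((y + p - 1) * (y + p - 2)) := by
    rw [eq_div_iff (by positivity)]; linarith
  have eS : S = (p * Q + (d + 2 * j + 1) * T) / (y + p) := by
    rw [eq_div_iff (by positivity)]; linarith
  rw [eS, eT, eR, eM, gPoly]
  have n1 := hj.ne'
  have n2 := hdj.ne'
  have n3 := hp.ne'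
  have n4 := h2.ne'
  have n5 := h3.ne'
  field_simp
  ring

lemma var_core {β : Type*} (s : Finset β) (f : β → ℕ) (hs : 0 < s.card) :
    0 ≤ (s.card : ℝ) * ∑ a ∈ s, (f a : ℝ) * f a - (∑ a ∈ s, (f a : ℝ)) ^ 2 ∧
    ((s.card : ℝ) * ∑ a ∈ s, (f a : ℝ) * f a - (∑ a ∈ s, (f a : ℝ)) ^ 2 = 0 ↔
      ∃ m : ℕ, ∀ a ∈ s, f a = m) := by
  have hs' : (0 : ℝ) < s.card := by exact_mod_cast hs
  set Q := ∑ a ∈ s, (f a : ℝ) with hQ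
  have key : ∑ a ∈ s, ((s.card : ℝ) * f a - Q) ^ 2
      = s.card * ((s.card : ℝ) * ∑ a ∈ s, (f a : ℝ) * f a - Q ^ 2) := by
    have : ∀ a ∈ s, ((s.card : ℝ) * f a - Q) ^ 2
        = (s.card : ℝ) ^ 2 * ((f a : ℝ) * f a) - 2 * s.card * Q * f a + Q ^ 2 := by
      intro a _; ring
    rw [sum_congr rfl this, sum_add_distrib, sum_sub_distrib, ← mul_sum, ← mul_sum, ← hQ,
      sum_const, nsmul_eq_mul]
    ring
  have hnn : 0 ≤ ∑ a ∈ s, ((s.card : ℝ) * f a - Q) ^ 2 := sum_nonneg fun a _ => sq_nonneg _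
  refine ⟨?_, ?_, ?_⟩
  · rw [key] at hnn
    exact nonneg_of_mul_nonneg_right hnn hs'
  · intro h
    rw [h, mul_zero, sum_eq_zero_iff_of_nonneg (fun a _ => sq_nonneg _)] at key
    obtain ⟨a0, ha0⟩ := card_pos.mp hs
    refine ⟨f a0, fun a ha => ?_⟩
    have e1 := pow_eq_zero_iff (two_ne_zero) |>.mp (key a ha)
    have e2 := pow_eq_zero_iff (two_ne_zero) |>.mp (key a0 ha0)
    have e3 : (s.card : ℝ) * f a = s.card * f a0 := by linarith
    exact_mod_cast mul_left_cancel₀ hs'.ne' e3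
  · rintro ⟨m, hm⟩
    have e1 : Q = s.card * m := by
      rw [hQ, sum_congr rfl (g := fun _ => (m : ℝ)) (fun a ha => by rw [hm a ha]), sum_const,
        nsmul_eq_mul]
    rw [e1, sum_congr rfl (g := fun _ => (m : ℝ) * m) (fun a ha => by rw [hm a ha]), sum_const,
        nsmul_eq_mul]
    ring

lemma core_main (𝓑 : Finset (Finset α)) (d c x j : ℕ)
    (hv : Fintype.card α = d + c + x) (hk : ∀ B ∈ 𝓑, B.card = d + c)
    (hd : ∀ B ∈ 𝓑, ∀ C ∈ 𝓑, B ≠ C → (B ∩ C).card ≤ d)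
    (hb : ∀ X : Finset α, X.card = d + 2 * j + 3 → ∃ B ∈ 𝓑, d + j + 2 ≤ (X ∩ B).card)
    (hcj : j + 2 ≤ c) (hx : c ≤ x) (hpos : 0 < 𝓑.card)
    (hub : (j + 1) * (d + c + x) < (d + 2 * (j + 1)) * c) :
    0 ≤ gPoly (x : ℝ) d c ((j : ℝ) + 2) ∧
    (gPoly (x : ℝ) d c ((j : ℝ) + 2) = 0 ↔
      ∃ m : ℕ, ∀ X ∈ unc 𝓑 (d + 2 * j) (d + j), (bl 𝓑 X (d + j)).card = m) := by
  have hA := sum_congr rfl (fun B (hB : B ∈ 𝓑) => lemA hv hk hd hb hcj hB)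
  rw [← sum_mul, ← sum_mul, sum_const, smul_eq_mul] at hA
  have hB := lemB (j := j) hv hk hd
  have hC := lemC (j := j) hk hd
  have hD := lemD (j := j) hv hk hd
  have hE := lemE (𝓑 := 𝓑) (d := d) (j := j)
  have h2 := sum_congr rfl (fun Y (hY : Y ∈ unc 𝓑 (d + 2 * j + 1) (d + j)) =>
    step2 hv hk hd hb hcj hY)
  have h3 := sum_congr rfl (fun Y (hY : Y ∈ unc 𝓑 (d + 2 * j) (d + j)) =>
    step3 hv hk hd hcj hY)
  rw [← sum_mul, sum_const, smul_eq_mul] at h2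
  rw [sum_add_distrib, sum_add_distrib, ← sum_mul, hE, sum_const, sum_const, smul_eq_mul,
    smul_eq_mul] at h3
  have hα : 0 < (d + c).choose (d + j) := Nat.choose_pos (by omega)
  have hβ : 0 < x.choose j := Nat.choose_pos (by omega)
  have hγ : 0 < c.choose j := Nat.choose_pos (by omega)
  have hQpos : 0 < ∑ X ∈ unc 𝓑 (d + 2 * j) (d + j), (bl 𝓑 X (d + j)).card := by
    rw [hB]; positivity
  have hScard : 0 < (unc 𝓑 (d + 2 * j) (d + j)).card := by
    rw [card_pos]
    by_contra h
    rw [not_nonempty_iff_eq_empty] at h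
    rw [h] at hQpos
    simp at hQpos
  have cα := Nat.choose_succ_right_eq (d + c) (d + j)
  have cβ := Nat.choose_succ_right_eq x j
  have cγ := Nat.choose_succ_right_eq c j
  obtain ⟨var1, var2⟩ := var_core (unc 𝓑 (d + 2 * j) (d + j))
    (fun X => (bl 𝓑 X (d + j)).card) hScard
  -- generalise everything
  generalize hgm2 : ∑ X ∈ unc 𝓑 (d + 2 * j) (d + j),
    (bl 𝓑 X (d + j)).card * (bl 𝓑 X (d + j)).card = M2 at *
  have r2 : ∑ X ∈ unc 𝓑 (d + 2 * j) (d + j),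
    ((bl 𝓑 X (d + j)).card : ℝ) * ((bl 𝓑 X (d + j)).card : ℝ) = (M2 : ℝ) := by
    rw [← hgm2]; push_cast; rfl
  generalize hgQ : ∑ X ∈ unc 𝓑 (d + 2 * j) (d + j), (bl 𝓑 X (d + j)).card = Q at *
  have r1 : ∑ X ∈ unc 𝓑 (d + 2 * j) (d + j), ((bl 𝓑 X (d + j)).card : ℝ) = (Q : ℝ) := by
    rw [← hgQ]; push_cast; rfl
  rw [r1, r2] at var1 var2
  rw [← var2]
  generalize ∑ Y ∈ unc 𝓑 (d + 2 * j + 1) (d + j), (bl 𝓑 Y (d + j)).card = R at *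
  generalize (unc 𝓑 (d + 2 * j) (d + j)).card = S at *
  generalize (unc 𝓑 (d + 2 * j + 1) (d + j)).card = T at *
  generalize ∑ B ∈ 𝓑, nb 𝓑 d B = N at *
  generalize 𝓑.card = b at *
  obtain ⟨q, rfl⟩ : ∃ q, c = q + 2 + j := ⟨c - j - 2, by omega⟩
  obtain ⟨z, rfl⟩ : ∃ z, x = z + 2 + j := ⟨x - j - 2, by omega⟩
  rw [show q + 2 + j - j - 1 = q + 1 by omega, show z + 2 + j - j - 1 = z + 1 by omega] at hA
  rw [show q + 2 + j - j = q + 2 by omega] at h2 h3 cγ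
  rw [show d + (q + 2 + j) + (z + 2 + j) - (d + 2 * j + 1) = q + z + 3 by omega] at h2
  rw [show d + (q + 2 + j) - (d + j) = q + 2 by omega] at cα
  rw [show z + 2 + j - j = z + 2 by omega] at cβ
  rw [show (q + 2) * (q + 2) - (q + 2) = (q + 2) * (q + 1) by
      rw [← Nat.mul_sub_one]; rfl,
    show (q + z + 3) * (q + z + 3) - (q + z + 3) = (q + z + 3) * (q + z + 2) by
      rw [← Nat.mul_sub_one]; rfl] at h2
  generalize (d + (q + 2 + j)).choose (d + j) = a0 at *
  generalize (d + (q + 2 + j)).choose (d + j + 1) = a1 at *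
  generalize (z + 2 + j).choose j = b0 at *
  generalize (z + 2 + j).choose (j + 1) = b1 at *
  generalize (q + 2 + j).choose j = g0 at *
  generalize (q + 2 + j).choose (j + 1) = g1 at *
  clear r1 r2 hgQ hgm2 var2 hE hv hk hd hb
  rify at hA hB hC hD h2 h3 hα hβ hγ hQpos hScard cα cβ cγ hub hpos
  push_cast
  have fM : ((q : ℝ) + 2) * ((q : ℝ) + 2 - 1) * (d + j + 1) * (N * (g0 * g0))
      = Q * (j + 1) * (z + 2) * (z + 2 - 1) := by
    have hb1 : (b1 : ℝ) = b0 * (z + 2) / (j + 1) := by rw [eq_div_iff (by positivity)]; exact cβ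
    have ha1 : (a1 : ℝ) = a0 * (q + 2) / (d + j + 1) := by
      rw [eq_div_iff (by positivity)]; exact cα
    have hg1 : (g1 : ℝ) = g0 * (q + 2) / (j + 1) := by rw [eq_div_iff (by positivity)]; exact cγ
    rw [hb1, ha1, hg1] at hA
    rw [hB]
    field_simp at hA
    linear_combination hA
  have fR : ((j : ℝ) + 1) * R = Q * (z + 2) - N * (g0 * g0) * (q + 2) := by
    rw [hB]
    linear_combination (j + 1 : ℝ) * hD + b * a0 * cβ - N * g0 * cγ
  have fT : ((q : ℝ) + 2) * ((q : ℝ) + 2 - 1) * R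
      = (((z : ℝ) + 2) + (q + 2) - 1) * (((z : ℝ) + 2) + (q + 2) - 2) * T := by
    linear_combination h2
  have fS : (((z : ℝ) + 2) + (q + 2)) * S = (q + 2) * Q + (d + 2 * j + 1) * T := by
    linear_combination -h3
  have key := alg_core (Q : ℝ) (N * (g0 * g0)) S T R d j (q + 2) (z + 2) (by positivity)
    (by positivity) (by linarith [(Nat.cast_nonneg q : (0 : ℝ) ≤ q)])
    (by linarith [(Nat.cast_nonneg z : (0 : ℝ) ≤ z)]) fM fR fT fS
  have hM2 : (M2 : ℝ) = N * (g0 * g0) + Q := by rw [hC]; ring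
  rw [← hM2] at key
  generalize gPoly ((z : ℝ) + 2 + j) d (q + 2 + j) (j + 2) = G at *
  have hh : 0 < (d : ℝ) * (q + 2 + j) + (j + 1) * (q + 2 - (z + 2) - d) := by
    linarith [hub]
  generalize (d : ℝ) * (q + 2 + j) + (j + 1) * (q + 2 - (z + 2) - d) = H at *
  have hK : 0 < ((z : ℝ) + 2 + (q + 2)) * (z + 2 + (q + 2) - 1) * (z + 2 + (q + 2) - 2) * (j + 1)
      * (d + j + 1) ^ 2 * (q + 2 - 1) := by
    rw [show (z : ℝ) + 2 + (q + 2) - 1 = z + q + 3 by ring,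
      show (z : ℝ) + 2 + (q + 2) - 2 = z + q + 2 by ring, show (q : ℝ) + 2 - 1 = q + 1 by ring]
    positivity
  generalize ((z : ℝ) + 2 + (q + 2)) * (z + 2 + (q + 2) - 1) * (z + 2 + (q + 2) - 2) * (j + 1)
      * (d + j + 1) ^ 2 * (q + 2 - 1) = K at *
  have hL : 0 < (Q : ℝ) ^ 2 * (z + 2) * H := by positivity
  have key' : K * ((S : ℝ) * M2 - Q ^ 2) = ((Q : ℝ) ^ 2 * (z + 2) * H) * G := by
    rw [key]; ring
  constructor
  · have := mul_nonneg hK.le var1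
    rw [key'] at this
    exact nonneg_of_mul_nonneg_right this hL
  · constructor
    · intro h
      rw [h, mul_zero] at key'
      exact (mul_eq_zero.mp key').resolve_left hK.ne'
    · intro h
      rw [h, mul_zero] at key'
      exact (mul_eq_zero.mp key'.symm).resolve_left hL.ne'

/-- **Proposition 6.** Let `𝓑` be a `β(i)` design with parameter `(v, k, d)`, `c = k - d`,
`i ≥ 2`, and suppose `v` does not achieve the upper bound `(d + 2(i-1))(k-d)/(i-1)`.
Then `g(v-k, d, c, i) ≥ 0`, with equality if and only if the number of blocks `B` with
`|X ∩ B| = d + i - 2` does not depend on the choice of `X ∈ S₁`. -/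
theorem prop6 (𝓑 : Finset (Finset α)) (v k d i c : ℕ)
    (hB : IsBetaDesign 𝓑 v k d i) (hi : 2 ≤ i) (hc : c = k - d)
    (hub : (i - 1) * v < (d + 2 * (i - 1)) * (k - d)) :
    0 ≤ gPoly ((v : ℝ) - (k : ℝ)) (d : ℝ) (c : ℝ) (i : ℝ) ∧
    (gPoly ((v : ℝ) - (k : ℝ)) (d : ℝ) (c : ℝ) (i : ℝ) = 0 ↔
      ∃ m : ℕ, ∀ X ∈ S1 𝓑 d i,
        (𝓑.filter (fun B => (X ∩ B).card = d + i - 2)).card = m) := by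
  obtain ⟨⟨hv, hb2, hdk, hkv, hk, hd, B0, hB0, C0, hC0, hne, hBC⟩, -, hi2, hb⟩ := hB
  obtain ⟨j, rfl⟩ : ∃ j, i = j + 2 := ⟨i - 2, by omega⟩
  have hkc : k = d + c := by omega
  obtain ⟨x, hx⟩ : ∃ x, v = d + c + x := ⟨v - k, by omega⟩
  subst hkc
  subst hx
  have hb' : ∀ X : Finset α, X.card = d + 2 * j + 3 → ∃ B ∈ 𝓑, d + j + 2 ≤ (X ∩ B).card := by
    intro X hX
    obtain ⟨B, ⟨h1, h2⟩, -⟩ := hb X (by omega)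
    exact ⟨B, h1, by omega⟩
  have hcj : j + 2 ≤ c := by
    obtain ⟨X, -, hX⟩ := exists_subset_card_eq (s := (univ : Finset α)) (n := d + 2 * j + 3)
      (by rw [card_univ]; omega)
    obtain ⟨B, h1, h2⟩ := hb' X hX
    have h3 := card_le_card (inter_subset_right (s₁ := X) (s₂ := B))
    have h4 := hk B h1
    omega
  have hcx : c ≤ x := by
    have h1 := card_union_add_card_inter B0 C0
    have h2 := card_le_univ (B0 ∪ C0)
    have h3 := hk B0 hB0
    have h4 := hk C0 hC0
    omega
  have main := core_main 𝓑 d c x j hv hk hd hb' hcj hcx (by omega) (by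
    have e1 : j + 2 - 1 = j + 1 := by omega
    have e2 : d + c - d = c := by omega
    rw [e1, e2] at hub
    exact hub)
  have e1 : ((d + c + x : ℕ) : ℝ) - ((d + c : ℕ) : ℝ) = x := by push_cast; ring
  have e2 : ((j + 2 : ℕ) : ℝ) = (j : ℝ) + 2 := by push_cast; ring
  rw [e1, e2]
  have e3 : S1 𝓑 d (j + 2) = unc 𝓑 (d + 2 * j) (d + j) := rfl
  rw [e3]
  exact main
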